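/- arXiv:2312.00711 — 4 statements merged into one kernel-verified Lean document; each statement's English description precedes it below -/
import Mathlib

section
/- Let h : [0,∞) → ℝ be twice differentiable with h''(x) − 2 h'(x) = h(x)² for all x ≥ 0, and suppose h is not identically zero. Then x · h(x) → 2 as x → ∞, i.e. h(x) ∼ 2/x as x → ∞. -/
open Set Filter

lemma aux_mono {f f' : ℝ → ℝ} {a : ℝ} (ha : 0 ≤ a)
    (hf : ∀ x, a ≤ x → HasDerivWithinAt f (f' x) (Ici 0) x)
    (hp : ∀ x, a ≤ x → 0 ≤ f' x) {x y : ℝ} (hx : a ≤ x) (hxy : x ≤ y) : f x ≤ f y := by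
  have hm : MonotoneOn f (Ici a) := by
    apply monotoneOn_of_hasDerivWithinAt_nonneg (f' := f') (convex_Ici a)
    · intro z hz
      exact ((hf z hz).mono (Ici_subset_Ici.2 ha)).continuousWithinAt
    · intro z hz
      exact (hf z (interior_subset hz)).mono (interior_subset.trans (Ici_subset_Ici.2 ha))
    · intro z hz
      exact hp z (interior_subset hz)
  exact hm hx (le_trans hx hxy) hxy

lemma aux_lin {f f' : ℝ → ℝ} {a c : ℝ} (ha : 0 ≤ a)
    (hf : ∀ x, a ≤ x → HasDerivWithinAt f (f' x) (Ici 0) x)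
    (hp : ∀ x, a ≤ x → c ≤ f' x) {x : ℝ} (hx : a ≤ x) : f a + c * (x - a) ≤ f x := by
  have := aux_mono (f := fun x => f x - c * x) (f' := fun x => f' x - c * 1) ha
    (fun x hx => (hf x hx).sub ((hasDerivWithinAt_id x _).const_mul c))
    (fun x hx => by have := hp x hx; linarith) le_rfl hx
  linarith

lemma aux_exp {f f' : ℝ → ℝ} {a : ℝ} (k : ℝ) (ha : 0 ≤ a)
    (hf : ∀ x, a ≤ x → HasDerivWithinAt f (f' x) (Ici 0) x)
    (hp : ∀ x, a ≤ x → k * f x ≤ f' x) {x y : ℝ} (hx : a ≤ x) (hxy : x ≤ y) :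
    f x * Real.exp (-k * x) ≤ f y * Real.exp (-k * y) := by
  refine aux_mono (f := fun x => f x * Real.exp (-k * x))
    (f' := fun x => f' x * Real.exp (-k * x) + f x * (Real.exp (-k * x) * (-k * 1))) ha
    (fun x hx => (hf x hx).mul (((hasDerivWithinAt_id x _).const_mul (-k)).exp))
    (fun x hx => ?_) hx hxy
  have h1 := hp x hx
  have h2 := Real.exp_pos (-k * x)
  nlinarith

lemma aux_grow {f f' : ℝ → ℝ} {a : ℝ} (ha : 0 ≤ a)
    (hf : ∀ x, a ≤ x → HasDerivWithinAt f (f' x) (Ici 0) x)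
    (hp : ∀ x, a ≤ x → 2 * f x ≤ f' x) (h0 : 0 < f a) {x : ℝ} (hx : a ≤ x) : f a ≤ f x := by
  have h1 := aux_exp 2 ha hf hp le_rfl hx
  have h2 : Real.exp (-2 * x) ≤ Real.exp (-2 * a) := Real.exp_le_exp.2 (by linarith)
  have h3 := Real.exp_pos (-2 * x)
  have h4 : f a * Real.exp (-2 * x) ≤ f x * Real.exp (-2 * x) :=
    (mul_le_mul_of_nonneg_left h2 h0.le).trans h1
  exact le_of_mul_le_mul_right h4 h3

lemma aux_unbdd {f f' : ℝ → ℝ} {a : ℝ} (ha : 0 ≤ a)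
    (hf : ∀ x, a ≤ x → HasDerivWithinAt f (f' x) (Ici 0) x)
    (hp : ∀ x, a ≤ x → 2 * f x ≤ f' x) (h0 : 0 < f a) (B : ℝ)
    (hB : ∀ x, a ≤ x → f x ≤ B) : False := by
  have hBp : 0 < B := h0.trans_le (hB a le_rfl)
  have hx : a ≤ a + B / f a := by have := div_pos hBp h0; linarith
  have h1 := aux_lin (c := 2 * f a) ha hf
    (fun x hx => by have := hp x hx; have := aux_grow ha hf hp h0 hx; linarith) hx
  have h2 := hB _ hx
  have h3 : 2 * f a * (a + B / f a - a) = 2 * B := by field_simp; ring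
  linarith

lemma aux_blow {f f' : ℝ → ℝ} {a c : ℝ} (ha : 0 ≤ a) (hc : 0 < c)
    (hf : ∀ x, a ≤ x → HasDerivWithinAt f (f' x) (Ici 0) x)
    (hpos : ∀ x, a ≤ x → 0 < f x)
    (hp : ∀ x, a ≤ x → c * f x ^ 2 ≤ f' x) : False := by
  have hq : a ≤ a + (f a)⁻¹ / c := by
    have := div_pos (inv_pos.2 (hpos a le_rfl)) hc; linarith
  have h1 := aux_lin (f := fun x => -(f x)⁻¹) (f' := fun x => -(-(f' x) / f x ^ 2)) (c := c) ha
    (fun x hx => ((hf x hx).fun_inv (hpos x hx).ne').neg)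
    (fun x hx => by
      have := hpos x hx
      rw [neg_div, neg_neg, le_div_iff₀ (by positivity)]
      exact hp x hx) hq
  have h2 := inv_pos.2 (hpos _ hq)
  have h3 : c * (a + (f a)⁻¹ / c - a) = (f a)⁻¹ := by
    rw [add_sub_cancel_left]; field_simp
  linarith

section
variable {h g : ℝ → ℝ}

lemma aux_g_nonpos
    (hh : ∀ x, 0 ≤ x → HasDerivWithinAt h (g x) (Ici 0) x)
    (hg : ∀ x, 0 ≤ x → HasDerivWithinAt g (2 * g x + h x ^ 2) (Ici 0) x)
    {a : ℝ} (ha : 0 ≤ a) : g a ≤ 0 := by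
  by_contra! h0
  have hgr : ∀ x, a ≤ x → g a ≤ g x := fun x hx => aux_grow ha
    (fun x hx => hg x (ha.trans hx)) (fun x hx => by nlinarith [sq_nonneg (h x)]) h0 hx
  have hlin : ∀ x, a ≤ x → h a + g a * (x - a) ≤ h x := fun x hx =>
    aux_lin ha (fun x hx => hh x (ha.trans hx)) hgr hx
  have hen : ∀ x, a ≤ x → g a ^ 2 - 2 / 3 * h a ^ 3 ≤ g x ^ 2 - 2 / 3 * h x ^ 3 := fun x hx => by
    refine aux_mono (f := fun x => g x ^ 2 - 2 / 3 * h x ^ 3) ha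
      (fun x hx => ((hg x (ha.trans hx)).fun_pow 2).sub
        (((hh x (ha.trans hx)).fun_pow 3).const_mul (2 / 3))) (fun x hx => ?_) le_rfl hx
    have := hgr x hx
    have : 0 < g x := by linarith
    norm_num
    nlinarith [sq_nonneg (g x)]
  set D : ℝ := |g a ^ 2 - 2 / 3 * h a ^ 3| with hD
  have hDn : 0 ≤ D := abs_nonneg _
  set b : ℝ := a + (|h a| + 1 + 3 * D) / g a with hb
  have hab : a ≤ b := by
    have : 0 ≤ (|h a| + 1 + 3 * D) / g a := by positivity
    linarith
  have hbig : ∀ x, b ≤ x → 1 + 3 * D ≤ h x := fun x hx => by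
    have h1 := hlin x (hab.trans hx)
    have h2 : g a * (b - a) = |h a| + 1 + 3 * D := by
      rw [hb, add_sub_cancel_left]; field_simp
    have h3 : g a * (b - a) ≤ g a * (x - a) := by gcongr
    have := neg_abs_le (h a)
    linarith
  have hb0 : 0 ≤ b := ha.trans hab
  have hpos : ∀ x, b ≤ x → 0 < h x := fun x hx => by have := hbig x hx; linarith
  refine aux_blow (f := fun x => Real.sqrt (h x)) (c := 1 / 4) hb0 (by norm_num)
    (fun x hx => (hh x (hb0.trans hx)).sqrt (hpos x hx).ne')
    (fun x hx => Real.sqrt_pos.2 (hpos x hx)) (fun x hx => ?_)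
  have hs := Real.sqrt_pos.2 (hpos x hx)
  have hsq := Real.sq_sqrt (hpos x hx).le
  have h1 := hbig x hx
  have h2 := hen x (hab.trans hx)
  have h3 := neg_abs_le (g a ^ 2 - 2 / 3 * h a ^ 3)
  rw [← hD] at h3
  have h4 : 3 * D ≤ h x ^ 3 := by
    have : h x ≤ h x ^ 3 := le_self_pow₀ (by linarith) (by norm_num)
    linarith
  have hgx : 0 < g x := h0.trans_le (hgr x (hab.trans hx))
  rw [le_div_iff₀ (by positivity)]
  set s := Real.sqrt (h x)
  have h5 : (s ^ 3 / 2) ^ 2 ≤ g x ^ 2 := by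
    have : (s ^ 3 / 2) ^ 2 = h x ^ 3 / 4 := by rw [← hsq]; ring
    rw [this]
    have : 0 < h x ^ 3 := pow_pos (hpos x hx) 3
    linarith
  have h6 := (pow_le_pow_iff_left₀ (by positivity) hgx.le (by norm_num)).1 h5
  nlinarith

lemma aux_anti
    (hh : ∀ x, 0 ≤ x → HasDerivWithinAt h (g x) (Ici 0) x)
    (hg : ∀ x, 0 ≤ x → HasDerivWithinAt g (2 * g x + h x ^ 2) (Ici 0) x)
    {x y : ℝ} (hx : 0 ≤ x) (hxy : x ≤ y) : h y ≤ h x := by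
  have := aux_mono (f := fun x => -h x) le_rfl (fun x hx => (hh x hx).neg)
    (fun x hx => by have := aux_g_nonpos hh hg hx; linarith) hx hxy
  linarith

lemma aux_w
    (hh : ∀ x, 0 ≤ x → HasDerivWithinAt h (g x) (Ici 0) x)
    (hg : ∀ x, 0 ≤ x → HasDerivWithinAt g (2 * g x + h x ^ 2) (Ici 0) x)
    (c : ℝ) {x : ℝ} (hx : 0 ≤ x) :
    HasDerivWithinAt (fun x => g x + c * h x ^ 2)
      (2 * g x + h x ^ 2 + 2 * c * h x * g x) (Ici 0) x := by
  refine ((hg x hx).fun_add (((hh x hx).fun_pow 2).const_mul c)).congr_deriv ?_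
  norm_num
  ring

lemma aux_h_nonneg
    (hh : ∀ x, 0 ≤ x → HasDerivWithinAt h (g x) (Ici 0) x)
    (hg : ∀ x, 0 ≤ x → HasDerivWithinAt g (2 * g x + h x ^ 2) (Ici 0) x)
    {a : ℝ} (ha : 0 ≤ a) : 0 ≤ h a := by
  by_contra! h0
  have hneg : ∀ x, a ≤ x → h x < 0 := fun x hx => (aux_anti hh hg ha hx).trans_lt h0
  have hgn : ∀ x, a ≤ x → g x ≤ 0 := fun x hx => aux_g_nonpos hh hg (ha.trans hx)
  refine aux_blow (f := fun x => - h x) (c := 1 / 2) ha (by norm_num)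
    (fun x hx => (hh x (ha.trans hx)).neg) (fun x hx => by have := hneg x hx; linarith)
    (fun b hb => ?_)
  by_contra! hw
  have hb0 := ha.trans hb
  have hwb : 0 < g b + 1 / 2 * h b ^ 2 := by nlinarith
  have hgrow : ∀ x, b ≤ x → g b + 1 / 2 * h b ^ 2 ≤ g x + 1 / 2 * h x ^ 2 := fun x hx =>
    aux_grow (f := fun x => g x + 1 / 2 * h x ^ 2) hb0
      (fun x hx => aux_w hh hg (1 / 2) (hb0.trans hx))
      (fun x hx => by
        have := mul_nonneg_of_nonpos_of_nonpos (hneg x (hb.trans hx)).le (hgn x (hb.trans hx))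
        nlinarith) hwb hx
  set w := g b + 1 / 2 * h b ^ 2
  have hq : b ≤ b + (1 - g b) / w := by
    have : 0 ≤ (1 - g b) / w := div_nonneg (by linarith [hgn b hb]) hwb.le
    linarith
  have h1 := aux_lin (f := g) (c := w) hb0 (fun x hx => hg x (hb0.trans hx))
    (fun x hx => by have := hgrow x hx; linarith) hq
  have h2 := hgn _ (hb.trans hq)
  have h3 : w * (b + (1 - g b) / w - b) = 1 - g b := by
    rw [add_sub_cancel_left]; field_simp
  linarith

lemma aux_h_pos
    (hh : ∀ x, 0 ≤ x → HasDerivWithinAt h (g x) (Ici 0) x)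
    (hg : ∀ x, 0 ≤ x → HasDerivWithinAt g (2 * g x + h x ^ 2) (Ici 0) x)
    (hne : ∃ x ∈ Ici (0 : ℝ), h x ≠ 0)
    {a : ℝ} (ha : 0 ≤ a) : 0 < h a := by
  by_contra! h0
  obtain ⟨x, hx, hxn⟩ := hne
  have hx : 0 ≤ x := hx
  have hz : ∀ y, a ≤ y → h y = 0 := fun y hy =>
    le_antisymm ((aux_anti hh hg ha hy).trans h0) (aux_h_nonneg hh hg (ha.trans hy))
  have hxa : x ≤ a + 1 := by
    by_contra! hc
    exact hxn (hz x (by linarith))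
  have ha1 : 0 < a + 1 := by linarith
  have hga : g (a + 1) = 0 := by
    have h1 : HasDerivAt h (g (a + 1)) (a + 1) :=
      (hh (a + 1) ha1.le).hasDerivAt (Ici_mem_nhds ha1)
    have h2 : HasDerivAt h 0 (a + 1) := by
      refine (hasDerivAt_const (a + 1) (0 : ℝ)).congr_of_eventuallyEq ?_
      filter_upwards [Ici_mem_nhds (show a < a + 1 by linarith)] with y hy
      exact hz y hy
    exact h1.unique h2
  have key := aux_exp (f := fun x => h x ^ 2 + g x ^ 2) (-(1 + h 0)) le_rfl
    (fun x hx => ((hh x hx).fun_pow 2).add ((hg x hx).fun_pow 2))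
    (fun x hx => by
      have hb := aux_anti hh hg le_rfl hx
      have hn := aux_h_nonneg hh hg hx
      norm_num
      have e1 : 0 ≤ h x * (h x + g x) ^ 2 := by positivity
      have e2 : 0 ≤ (h 0 - h x) * (h x ^ 2 + g x ^ 2) :=
        mul_nonneg (by linarith) (by positivity)
      nlinarith [sq_nonneg (h x + g x), mul_nonneg hn (sq_nonneg (g x)),
        mul_nonneg hn (sq_nonneg (h x)), sq_nonneg (g x)]) hx hxa
  simp only [hz (a + 1) (by linarith), hga] at key
  have : 0 < h x ^ 2 := by positivity
  have e := Real.exp_pos (-(-(1 + h 0)) * x)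
  nlinarith [sq_nonneg (g x), mul_pos this e, mul_nonneg (sq_nonneg (g x)) e.le]

lemma aux_lower
    (hh : ∀ x, 0 ≤ x → HasDerivWithinAt h (g x) (Ici 0) x)
    (hg : ∀ x, 0 ≤ x → HasDerivWithinAt g (2 * g x + h x ^ 2) (Ici 0) x)
    {a : ℝ} (ha : 0 ≤ a) : -(1 / 2 * h a ^ 2) ≤ g a := by
  by_contra! hw
  have hgn : ∀ x, 0 ≤ x → g x ≤ 0 := fun x hx => aux_g_nonpos hh hg hx
  have hn : ∀ x, 0 ≤ x → 0 ≤ h x := fun x hx => aux_h_nonneg hh hg hx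
  have hgrow : ∀ x, a ≤ x → -(g a + 1 / 2 * h a ^ 2) ≤ -(g x + 1 / 2 * h x ^ 2) := fun x hx =>
    aux_grow (f := fun x => -(g x + 1 / 2 * h x ^ 2)) ha
      (fun x hx => (aux_w hh hg (1 / 2) (ha.trans hx)).neg)
      (fun x hx => by
        have := mul_nonneg (hn x (ha.trans hx)) (neg_nonneg.2 (hgn x (ha.trans hx)))
        nlinarith) (by linarith) hx
  set w := -(g a + 1 / 2 * h a ^ 2) with hw'
  have hwp : 0 < w := by linarith
  have hq : a ≤ a + (1 + h a) / w := by
    have : 0 ≤ (1 + h a) / w := div_nonneg (by linarith [hn a ha]) hwp.le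
    linarith
  have h1 := aux_lin (f := fun x => - h x) (c := w) ha (fun x hx => (hh x (ha.trans hx)).neg)
    (fun x hx => by have := hgrow x hx; nlinarith [sq_nonneg (h x)]) hq
  have h2 := hn _ (ha.trans hq)
  have h3 : w * (a + (1 + h a) / w - a) = 1 + h a := by
    rw [add_sub_cancel_left]; field_simp
  linarith

lemma aux_upper
    (hh : ∀ x, 0 ≤ x → HasDerivWithinAt h (g x) (Ici 0) x)
    (hg : ∀ x, 0 ≤ x → HasDerivWithinAt g (2 * g x + h x ^ 2) (Ici 0) x)
    {a c : ℝ} (ha : 0 ≤ a) (hc : 0 < c) (hca : c * (2 + h a) ≤ 1) : g a ≤ -(c * h a ^ 2) := by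
  by_contra! hw
  have hgn : ∀ x, 0 ≤ x → g x ≤ 0 := fun x hx => aux_g_nonpos hh hg hx
  have hn : ∀ x, 0 ≤ x → 0 ≤ h x := fun x hx => aux_h_nonneg hh hg hx
  refine aux_unbdd (f := fun x => g x + c * h x ^ 2) ha
    (fun x hx => aux_w hh hg c (ha.trans hx)) (fun x hx => ?_) (by linarith)
    (c * h a ^ 2) (fun x hx => ?_)
  · have h1 := aux_lower hh hg (ha.trans hx)
    have h2 := hn x (ha.trans hx)
    have h3 := aux_anti hh hg ha hx
    have h4 : c * h x * (-(1 / 2 * h x ^ 2)) ≤ c * h x * g x :=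
      mul_le_mul_of_nonneg_left h1 (by positivity)
    have h5 : c * (2 + h x) ≤ 1 := le_trans (by gcongr) hca
    have h6 : c * (2 + h x) * h x ^ 2 ≤ 1 * h x ^ 2 := by gcongr
    nlinarith
  · have h2 := hn x (ha.trans hx)
    have h3 := aux_anti hh hg ha hx
    have h4 : c * h x ^ 2 ≤ c * h a ^ 2 := by gcongr
    have := hgn x (ha.trans hx)
    linarith

lemma aux_inv_upper
    (hh : ∀ x, 0 ≤ x → HasDerivWithinAt h (g x) (Ici 0) x)
    (hg : ∀ x, 0 ≤ x → HasDerivWithinAt g (2 * g x + h x ^ 2) (Ici 0) x)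
    (hpos : ∀ x, 0 ≤ x → 0 < h x)
    {x : ℝ} (hx : 0 ≤ x) : (h x)⁻¹ ≤ (h 0)⁻¹ + 1 / 2 * x := by
  have := aux_lin (f := fun x => -(h x)⁻¹) (c := -(1 / 2)) le_rfl
    (fun x hx => ((hh x hx).fun_inv (hpos x hx).ne').neg)
    (fun x hx => by
      have := hpos x hx
      have := aux_lower hh hg hx
      rw [neg_div, neg_neg, le_div_iff₀ (by positivity)]
      linarith) hx
  linarith

lemma aux_inv_lower
    (hh : ∀ x, 0 ≤ x → HasDerivWithinAt h (g x) (Ici 0) x)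
    (hg : ∀ x, 0 ≤ x → HasDerivWithinAt g (2 * g x + h x ^ 2) (Ici 0) x)
    (hpos : ∀ x, 0 ≤ x → 0 < h x)
    {a c : ℝ} (ha : 0 ≤ a) (hc : 0 < c) (hca : c * (2 + h a) ≤ 1)
    {x : ℝ} (hx : a ≤ x) : c * (x - a) ≤ (h x)⁻¹ := by
  have := aux_lin (f := fun x => (h x)⁻¹) (c := c) ha
    (fun x hx => ((hh x (ha.trans hx)).fun_inv (hpos x (ha.trans hx)).ne'))
    (fun x hx => by
      have h0 := hpos x (ha.trans hx)
      have h1 : c * (2 + h x) ≤ 1 :=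
        le_trans (by have := aux_anti hh hg ha hx; gcongr) hca
      have := aux_upper hh hg (ha.trans hx) hc h1
      rw [le_div_iff₀ (by positivity)]
      linarith) hx
  have h2 := inv_pos.2 (hpos a ha)
  linarith

lemma aux_main
    (hh : ∀ x, 0 ≤ x → HasDerivWithinAt h (g x) (Ici 0) x)
    (hg : ∀ x, 0 ≤ x → HasDerivWithinAt g (2 * g x + h x ^ 2) (Ici 0) x)
    (hpos : ∀ x, 0 ≤ x → 0 < h x) :
    Tendsto (fun x => x * h x) atTop (nhds 2) := by
  have hinv : Tendsto (fun x => (h x)⁻¹) atTop atTop := by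
    have h0 := hpos 0 le_rfl
    have hc : 0 < (2 + h 0)⁻¹ := by positivity
    refine tendsto_atTop_mono' atTop ?_ (tendsto_id.const_mul_atTop hc)
    filter_upwards [eventually_ge_atTop 0] with x hx
    have := aux_inv_lower hh hg hpos le_rfl hc (by rw [inv_mul_cancel₀]; positivity) hx
    simpa using this
  have hto : Tendsto h atTop (nhds 0) := by
    exact hinv.inv_tendsto_atTop.congr (fun x => by simp)
  have key : Tendsto (fun x => (h x)⁻¹ / x) atTop (nhds (1 / 2)) := by
    rw [tendsto_order]
    constructor
    · intro l hl
      obtain ⟨c, hc1, hc2⟩ := exists_between (max_lt hl (show (0 : ℝ) < 1 / 2 by norm_num))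
      have hc0 : 0 < c := (le_max_right _ _).trans_lt hc1
      have hlc : l < c := (le_max_left _ _).trans_lt hc1
      have e1 : Tendsto (fun x => c * (2 + h x)) atTop (nhds (c * (2 + 0))) :=
        (hto.const_add 2).const_mul c
      obtain ⟨a, haa, ha⟩ := ((e1.eventually_lt_const (show c * (2 + 0) < 1 by linarith)).and
        (eventually_ge_atTop 0)).exists
      have e2 : ∀ᶠ x : ℝ in atTop, c * a / (c - l) < x := eventually_gt_atTop _
      filter_upwards [e2, eventually_ge_atTop a, eventually_gt_atTop 0] with x hx1 hx2 hx3
      have := aux_inv_lower hh hg hpos ha hc0 haa.le hx2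
      rw [div_lt_iff₀ (by linarith)] at hx1
      rw [lt_div_iff₀ hx3]
      linarith
    · intro u hu
      filter_upwards [eventually_gt_atTop ((h 0)⁻¹ / (u - 1 / 2)), eventually_gt_atTop 0]
        with x hx1 hx3
      have := aux_inv_upper hh hg hpos hx3.le
      rw [div_lt_iff₀ (by linarith)] at hx1
      rw [div_lt_iff₀ hx3]
      linarith
  have := key.inv₀ (by norm_num)
  norm_num at this
  refine this.congr (fun x => ?_)
  simp
end

/-- First-order asymptotics of solutions of `h'' - 2h' = h²` on `[0,∞)`:
any twice differentiable solution which is not identically zero satisfies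
`x · h(x) → 2` as `x → ∞`, i.e. `h(x) ∼ 2/x`.  Derivatives on `[0,∞)` are
formalised as derivatives within `Set.Ici 0`. -/
theorem hSol_first_order_asymptotics (h : ℝ → ℝ)
    (hf1 : DifferentiableOn ℝ h (Set.Ici 0))
    (hf2 : DifferentiableOn ℝ (derivWithin h (Set.Ici 0)) (Set.Ici 0))
    (hODE : ∀ x ∈ Set.Ici (0 : ℝ),
      derivWithin (derivWithin h (Set.Ici 0)) (Set.Ici 0) x
        - 2 * derivWithin h (Set.Ici 0) x = (h x) ^ 2)
    (hne : ∃ x ∈ Set.Ici (0 : ℝ), h x ≠ 0) :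
    Filter.Tendsto (fun x => x * h x) Filter.atTop (nhds 2) := by
  have hh : ∀ x, 0 ≤ x → HasDerivWithinAt h (derivWithin h (Ici 0) x) (Ici 0) x :=
    fun x hx => (hf1 x hx).hasDerivWithinAt
  have hg : ∀ x, 0 ≤ x → HasDerivWithinAt (derivWithin h (Ici 0))
      (2 * derivWithin h (Ici 0) x + h x ^ 2) (Ici 0) x := fun x hx => by
    have h1 := (hf2 x hx).hasDerivWithinAt
    have h2 := hODE x hx
    rwa [show derivWithin (derivWithin h (Ici 0)) (Ici 0) x
      = 2 * derivWithin h (Ici 0) x + h x ^ 2 by linarith] at h1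
  exact aux_main hh hg (fun x hx => aux_h_pos hh hg hne hx)
end

section
/- Let λ ∈ (0,1). There exists a constant C_λ ∈ ℝ such that, as x → ∞, g_λ(x) = −2/x + (2 log x + C_λ)/x² + o(1/x²) and g_λ'(x) = 2/x² − (4 log x + 2 C_λ − 2)/x³ + o(1/x³). -/
open Set Filter

/-- First derivative on `[0,∞)` (derivative within `Set.Ici 0`). -/
noncomputable def derIci (g : ℝ → ℝ) : ℝ → ℝ := fun x => derivWithin g (Set.Ici 0) x

/-- Second derivative on `[0,∞)`. -/
noncomputable def derIci2 (g : ℝ → ℝ) : ℝ → ℝ := fun x => derivWithin (derIci g) (Set.Ici 0) x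

/-- `g : [0,∞) → ℝ` is a twice differentiable solution of `g'' + 2 g' = g²`
with `g(0) = 0` and `g'(0) = -λ`. -/
def IsGSol (lam : ℝ) (g : ℝ → ℝ) : Prop :=
  DifferentiableOn ℝ g (Set.Ici 0) ∧
  DifferentiableOn ℝ (derIci g) (Set.Ici 0) ∧
  (∀ x ∈ Set.Ici (0 : ℝ), derIci2 g x + 2 * derIci g x = (g x) ^ 2) ∧
  g 0 = 0 ∧ derIci g 0 = -lam

open Asymptotics

open Topology

/-- Differential inequality `y' ≤ c (a - y)` forces `y < b` eventually, for any `b > a`. -/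
lemma aux_upper_s12 (c : ℝ) (hc : 0 < c) (a b : ℝ) (hab : a < b) (y y' : ℝ → ℝ)
    (hy : ∀ᶠ x in atTop, HasDerivAt y (y' x) x)
    (hle : ∀ᶠ x in atTop, y' x ≤ c * (a - y x)) : ∀ᶠ x in atTop, y x < b := by
  obtain ⟨X, hX⟩ := eventually_atTop.1 (hy.and hle)
  have hd : ∀ x ∈ Ici X, HasDerivAt (fun t => Real.exp (c * t) * (y t - a))
      (Real.exp (c * x) * (c * 1) * (y x - a) + Real.exp (c * x) * (y' x)) x := by
    intro x hx
    have h0 : HasDerivAt (fun t : ℝ => c * t) (c * 1) x := (hasDerivAt_id x).const_mul c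
    exact h0.exp.mul ((hX x hx).1.sub_const a)
  have hanti : AntitoneOn (fun t => Real.exp (c * t) * (y t - a)) (Ici X) := by
    apply antitoneOn_of_hasDerivWithinAt_nonpos (convex_Ici X)
      (fun x hx => (hd x hx).continuousAt.continuousWithinAt)
      (fun x hx => (hd x (interior_subset hx)).hasDerivWithinAt)
    intro x hx
    have := (hX x (interior_subset hx)).2
    have he := Real.exp_pos (c * x)
    have : Real.exp (c * x) * (c * 1) * (y x - a) + Real.exp (c * x) * (y' x)
      = Real.exp (c * x) * (y' x - c * (a - y x)) := by ring
    rw [this]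
    exact mul_nonpos_of_nonneg_of_nonpos he.le (by linarith)
  set M := Real.exp (c * X) * (y X - a) with hM
  have ht : Tendsto (fun x : ℝ => Real.exp (c * x) * (b - a)) atTop atTop :=
    (Real.tendsto_exp_atTop.comp (tendsto_id.const_mul_atTop hc)).atTop_mul_const (by linarith)
  filter_upwards [ht.eventually_gt_atTop M, eventually_ge_atTop X] with x h1 h2
  have h3 := hanti (self_mem_Ici) h2 h2
  simp only at h3
  have he := Real.exp_pos (c * x)
  by_contra hcon
  push Not at hcon
  have : Real.exp (c * x) * (b - a) ≤ Real.exp (c * x) * (y x - a) := by gcongr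
  linarith

lemma aux_lower_s12 (c : ℝ) (hc : 0 < c) (a b : ℝ) (hab : b < a) (y y' : ℝ → ℝ)
    (hy : ∀ᶠ x in atTop, HasDerivAt y (y' x) x)
    (hle : ∀ᶠ x in atTop, c * (a - y x) ≤ y' x) : ∀ᶠ x in atTop, b < y x := by
  have := aux_upper_s12 c hc (-a) (-b) (by linarith) (fun x => - y x) (fun x => - y' x)
    (hy.mono fun x hx => hx.neg) (hle.mono fun x hx => by linarith)
  exact this.mono fun x hx => by linarith

lemma aux_lim (l : ℝ) (y f : ℝ → ℝ)
    (hy : ∀ᶠ x in atTop, HasDerivAt y (-2 * y x + f x) x)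
    (hf : Tendsto f atTop (𝓝 l)) : Tendsto y atTop (𝓝 (l / 2)) := by
  rw [tendsto_order]
  constructor
  · intro b hb
    apply aux_lower_s12 2 two_pos ((l/2 + b)/2) b (by linarith) y _ hy
    filter_upwards [hf.eventually_const_lt (show l/2 + b < l by linarith)] with x hx
    linarith
  · intro b hb
    apply aux_upper_s12 2 two_pos ((l/2 + b)/2) b (by linarith) y _ hy
    filter_upwards [hf.eventually_lt_const (show l < l/2 + b by linarith)] with x hx
    linarith

/-- Asymptotics for the inverse variable. -/
lemma aux_main_s12 (w r : ℝ → ℝ) (hw : ∀ x, 0 < x → 0 < w x)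
    (hwd : ∀ x, 0 < x → HasDerivAt w (r x) x)
    (hrd : ∀ x, 0 < x → HasDerivAt r (1 - 2 * r x + 2 * r x ^ 2 / w x) x)
    (hrw : ∀ x, 0 < x → r x / w x < 1 / 2) :
    ∃ K : ℝ, Tendsto (fun x => w x - x / 2 - Real.log x / 2) atTop (𝓝 K) ∧
      Tendsto (fun x => w x / x) atTop (𝓝 (1/2)) ∧
      Tendsto (fun x => x * (r x - 1/2)) atTop (𝓝 (1/2)) := by
  have hpos : ∀ᶠ x : ℝ in atTop, 0 < x := eventually_gt_atTop 0
  have hr1 : ∀ᶠ x in atTop, 1/4 < r x := by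
    apply aux_lower_s12 2 two_pos (1/2) _ (by norm_num) r _ (hpos.mono hrd)
    filter_upwards [hpos] with x hx
    have : 0 ≤ 2 * r x ^ 2 / w x := by have := hw x hx; positivity
    linarith
  have hr2 : ∀ᶠ x in atTop, r x < 2 := by
    apply aux_upper_s12 1 one_pos 1 _ (by norm_num) r _ (hpos.mono hrd)
    filter_upwards [hpos, hr1] with x hx h1
    have h2 := hrw x hx
    have : 2 * r x ^ 2 / w x = 2 * r x * (r x / w x) := by ring
    rw [this]
    nlinarith
  obtain ⟨X, hX⟩ := eventually_atTop.1 (hpos.and (hr1.and hr2))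
  have hX0 : 0 < X := (hX X le_rfl).1
  -- w → ∞
  have hwt : Tendsto w atTop atTop := by
    have hm : MonotoneOn (fun x => w x - 1/4 * x) (Ici X) := by
      have hd : ∀ x ∈ Ici X, HasDerivAt (fun x => w x - 1/4 * x) (r x - 1/4 * 1) x := fun x hx =>
        (hwd x (hX x hx).1).sub ((hasDerivAt_id x).const_mul _)
      apply monotoneOn_of_hasDerivWithinAt_nonneg (convex_Ici X)
        (fun x hx => (hd x hx).continuousAt.continuousWithinAt)
        (fun x hx => (hd x (interior_subset hx)).hasDerivWithinAt)
      intro x hx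
      have := (hX x (interior_subset hx)).2.1
      linarith
    have ht : Tendsto (fun x : ℝ => 1/4 * x + (w X - 1/4 * X)) atTop atTop :=
      tendsto_atTop_add_const_right _ _ (tendsto_id.const_mul_atTop (by norm_num))
    apply tendsto_atTop_mono' _ _ ht
    filter_upwards [eventually_ge_atTop X] with x hx
    have := hm self_mem_Ici hx hx
    simp only at this
    linarith
  have hwinv : Tendsto (fun x => (w x)⁻¹) atTop (𝓝 0) := tendsto_inv_atTop_zero.comp hwt
  -- the conserved-like quantity
  set Φ : ℝ → ℝ := fun x => w x + r x / 2 - x / 2 - Real.log (w x) / 2 + r x ^ 2 * (w x)⁻¹ / 4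
    with hΦ
  have hΦd : ∀ x ∈ Ici X, HasDerivAt Φ (3/4 * r x ^ 3 / w x ^ 2) x := by
    intro x hx
    have hx0 := (hX x hx).1
    have hw0 := (hw x hx0).ne'
    have a := hwd x hx0
    have b := hrd x hx0
    have := (((a.add (b.div_const 2)).sub ((hasDerivAt_id x).div_const 2)).sub
      ((a.log hw0).div_const 2)).add (((b.pow 2).mul (a.inv hw0)).div_const 4)
    refine this.congr_deriv ?_
    simp
    field_simp
    ring
  have hΦm : MonotoneOn Φ (Ici X) := by
    apply monotoneOn_of_hasDerivWithinAt_nonneg (convex_Ici X)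
      (fun x hx => (hΦd x hx).continuousAt.continuousWithinAt)
      (fun x hx => (hΦd x (interior_subset hx)).hasDerivWithinAt)
    intro x hx
    have h := (hX x (interior_subset hx))
    have := h.2.1
    have h0 : 0 < r x := by linarith
    have := hw x h.1
    positivity
  have hΨd : ∀ x ∈ Ici X, HasDerivAt (fun x => Φ x + 3 * (w x)⁻¹)
      (3/4 * r x ^ 3 / w x ^ 2 + 3 * (-(r x) / w x ^ 2)) x := by
    intro x hx
    have hx0 := (hX x hx).1
    exact (hΦd x hx).add (((hwd x hx0).inv (hw x hx0).ne').const_mul 3)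
  have hΨm : AntitoneOn (fun x => Φ x + 3 * (w x)⁻¹) (Ici X) := by
    apply antitoneOn_of_hasDerivWithinAt_nonpos (convex_Ici X)
      (fun x hx => (hΨd x hx).continuousAt.continuousWithinAt)
      (fun x hx => (hΨd x (interior_subset hx)).hasDerivWithinAt)
    intro x hx
    obtain ⟨h0, h1, h2⟩ := (hX x (interior_subset hx))
    have h3 : 0 < r x := by linarith
    have := hw x h0
    have e : 3/4 * r x ^ 3 / w x ^ 2 + 3 * (-(r x) / w x ^ 2)
      = -(3/4 * r x * ((2 - r x) * (2 + r x)) / w x ^ 2) := by field_simp; ring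
    rw [e]
    have : 0 < 2 - r x := by linarith
    have : 0 ≤ 3/4 * r x * ((2 - r x) * (2 + r x)) / w x ^ 2 := by positivity
    linarith
  obtain ⟨L, hL⟩ : ∃ L, Tendsto Φ atTop (𝓝 L) := by
    have hmono : Monotone (fun x => Φ (max x X)) := fun x y hxy =>
      hΦm (show X ≤ max x X from le_max_right _ _) (show X ≤ max y X from le_max_right _ _)
        (max_le_max_right X hxy)
    have hb : BddAbove (range fun x => Φ (max x X)) := by
      refine ⟨Φ X + 3 * (w X)⁻¹, ?_⟩
      rintro _ ⟨x, rfl⟩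
      have h := hΨm (self_mem_Ici) (le_max_right x X) (le_max_right x X)
      simp only at h
      have := hw (max x X) (hX _ (le_max_right x X)).1
      have : 0 < (w (max x X))⁻¹ := by positivity
      simp only
      linarith
    refine ⟨_, (tendsto_atTop_ciSup hmono hb).congr' ?_⟩
    filter_upwards [eventually_ge_atTop X] with x hx
    rw [max_eq_left hx]
  -- r² / w → 0
  have hr2w : Tendsto (fun x => r x ^ 2 * (w x)⁻¹) atTop (𝓝 0) := by
    have h4 : Tendsto (fun x => 4 * (w x)⁻¹) atTop (𝓝 0) := by simpa using hwinv.const_mul 4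
    apply squeeze_zero' _ _ h4
    · filter_upwards [hpos] with x hx
      have := hw x hx
      positivity
    · filter_upwards [hpos, hr1, hr2] with x hx h1 h2
      have := hw x hx
      have : r x ^ 2 ≤ 4 := by nlinarith
      gcongr
  have hs : Tendsto (fun x => r x - 1/2) atTop (𝓝 0) := by
    have := aux_lim 0 (fun x => r x - 1/2) (fun x => 2 * (r x ^ 2 * (w x)⁻¹)) ?_ ?_
    · simpa using this
    · filter_upwards [hpos] with x hx
      refine ((hrd x hx).sub_const (1/2)).congr_deriv ?_
      ring
    · simpa using hr2w.const_mul 2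
  have hr : Tendsto r atTop (𝓝 (1/2)) := by
    have := hs.add_const (1/2)
    simp only [sub_add_cancel, zero_add] at this
    exact this
  have hws : Tendsto (fun x => w x * (r x - 1/2)) atTop (𝓝 (1/4)) := by
    have := aux_lim (1/2) (fun x => w x * (r x - 1/2))
      (fun x => r x * (r x - 1/2) + 2 * r x ^ 2) ?_ ?_
    · convert this using 2; norm_num
    · filter_upwards [hpos] with x hx
      refine ((hwd x hx).mul ((hrd x hx).sub_const (1/2))).congr_deriv ?_
      have := (hw x hx).ne'
      field_simp
      ring
    · have := (hr.mul hs).add ((hr.pow 2).const_mul 2)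
      convert this using 2; norm_num
  -- w - x/2 - log w / 2 → L - 1/4
  have hw1 : Tendsto (fun x => w x - x / 2 - Real.log (w x) / 2) atTop (𝓝 (L - 1/4)) := by
    have := (hL.sub (hr.div_const 2)).sub (hr2w.div_const 4)
    convert this using 2
    · simp only [hΦ]; ring
    · norm_num
  have hlogw : Tendsto (fun x => Real.log (w x) * (w x)⁻¹) atTop (𝓝 0) := by
    have h : Tendsto (fun x : ℝ => Real.log x * x⁻¹) atTop (𝓝 0) := by
      have := Real.isLittleO_log_id_atTop.tendsto_div_nhds_zero
      simpa [div_eq_mul_inv] using this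
    exact h.comp hwt
  have hxw : Tendsto (fun x => x / w x) atTop (𝓝 2) := by
    have := ((hw1.mul hwinv).const_mul (-2)).add ((hlogw.const_mul (-1)).const_add 2)
    have h2 : Tendsto (fun x => -2 * ((w x - x / 2 - Real.log (w x) / 2) * (w x)⁻¹) +
        (2 + -1 * (Real.log (w x) * (w x)⁻¹))) atTop (𝓝 2) := by simpa using this
    refine h2.congr' ?_
    filter_upwards [hpos] with x hx
    have := (hw x hx).ne'
    field_simp
    ring
  have hwx : Tendsto (fun x => w x / x) atTop (𝓝 (1/2)) := by
    have := hxw.inv₀ two_ne_zero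
    simpa using this
  refine ⟨(L - 1/4) + Real.log (1/2) / 2, ?_, hwx, ?_⟩
  · have hl : Tendsto (fun x => Real.log (w x / x)) atTop (𝓝 (Real.log (1/2))) :=
      hwx.log (by norm_num)
    refine (hw1.add (hl.div_const 2)).congr' ?_
    filter_upwards [hpos] with x hx
    rw [Real.log_div (hw x hx).ne' hx.ne']
    ring
  · have := hxw.mul hws
    have h2 : Tendsto (fun x => x / w x * (w x * (r x - 1/2))) atTop (𝓝 (1/2)) := by
      convert this using 2; norm_num
    refine h2.congr' ?_
    filter_upwards [hpos] with x hx
    have := (hw x hx).ne'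
    field_simp

lemma aux_final (w r : ℝ → ℝ) (K : ℝ)
    (hK : Tendsto (fun x => w x - x / 2 - Real.log x / 2) atTop (𝓝 K))
    (hwx : Tendsto (fun x => w x / x) atTop (𝓝 (1/2)))
    (hr : Tendsto (fun x => x * (r x - 1/2)) atTop (𝓝 (1/2)))
    (hw : ∀ x, 0 < x → 0 < w x) :
    Tendsto (fun x => x ^ 2 * (-1 / w x - (-2 / x + (2 * Real.log x + 4 * K) / x ^ 2)))
      atTop (𝓝 0) ∧
    Tendsto (fun x => x ^ 3 * (r x / w x ^ 2 -
      (2 / x ^ 2 - (4 * Real.log x + 2 * (4 * K) - 2) / x ^ 3))) atTop (𝓝 0) := by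
  have hpos : ∀ᶠ x : ℝ in atTop, 0 < x := eventually_gt_atTop 0
  have he : Tendsto (fun x => w x - x / 2 - Real.log x / 2 - K) atTop (𝓝 0) := by
    simpa using hK.sub_const K
  have hxw : Tendsto (fun x => x / w x) atTop (𝓝 2) := by
    have := hwx.inv₀ (by norm_num)
    simpa using this
  have hlog : ∀ n : ℕ, Tendsto (fun x : ℝ => Real.log x ^ n / x) atTop (𝓝 0) := fun n =>
    (Real.isLittleO_pow_log_id_atTop (n := n)).tendsto_div_nhds_zero
  have hinv : Tendsto (fun x : ℝ => x⁻¹) atTop (𝓝 0) := tendsto_inv_atTop_zero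
  have hlog1 : Tendsto (fun x : ℝ => Real.log x / x) atTop (𝓝 0) := by simpa using hlog 1
  -- m = w - x/2; m/x → 0, m²/x → 0
  have hm1 : Tendsto (fun x => (w x - x / 2) / x) atTop (𝓝 0) := by
    have : Tendsto (fun x => w x / x - 1/2) atTop (𝓝 0) := by simpa using hwx.sub_const (1/2)
    refine this.congr' ?_
    filter_upwards [hpos] with x hx
    field_simp
  have hm2 : Tendsto (fun x => (w x - x / 2) ^ 2 / x) atTop (𝓝 0) := by
    have h := (((hK.pow 2).mul hinv).add (hK.mul hlog1)).add ((hlog 2).div_const 4)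
    have h2 : Tendsto (fun x => (w x - x / 2 - Real.log x / 2) ^ 2 * x⁻¹ +
      (w x - x / 2 - Real.log x / 2) * (Real.log x / x) + Real.log x ^ 2 / x / 4)
      atTop (𝓝 0) := by simpa using h
    refine h2.congr' ?_
    filter_upwards [hpos] with x hx
    field_simp
    ring
  constructor
  · have h := hxw.mul (((he.const_mul 2).sub (hm2.const_mul 4)).add ((he.mul hm1).const_mul 4))
    simp only [mul_zero, sub_zero, add_zero] at h
    refine h.congr' ?_
    filter_upwards [hpos] with x hx
    have := (hw x hx).ne'
    field_simp
    ring
  · have h := (((hxw.pow 2).mul hr).sub_const 2).add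
      (((hxw.pow 2).mul ((hm2.const_mul 6).add ((hm1.mul hm2).const_mul 8))).sub
        (he.const_mul 8))
    have h2 := h
    norm_num at h2
    refine h2.congr' ?_
    filter_upwards [hpos] with x hx
    have := (hw x hx).ne'
    field_simp
    ring

lemma aux_sol (lam : ℝ) (h1 : 0 < lam) (h2 : lam < 1) (g : ℝ → ℝ) (hg : IsGSol lam g) :
    (∀ x, 0 < x → HasDerivAt g (derIci g x) x) ∧
    (∀ x, 0 < x → HasDerivAt (derIci g) (g x ^ 2 - 2 * derIci g x) x) ∧
    (∀ x, 0 < x → g x < 0) ∧ (∀ x, 0 < x → derIci g x < - g x / 2) := by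
  obtain ⟨hd1, hd2, hode, hg0, hp0⟩ := hg
  have hgd : ∀ x, 0 < x → HasDerivAt g (derIci g x) x := fun x hx =>
    (hd1 x hx.le).hasDerivWithinAt.hasDerivAt (Ici_mem_nhds hx)
  have hpd : ∀ x, 0 < x → HasDerivAt (derIci g) (g x ^ 2 - 2 * derIci g x) x := fun x hx => by
    refine ((hd2 x hx.le).hasDerivWithinAt.hasDerivAt (Ici_mem_nhds hx)).congr_deriv ?_
    have := hode x hx.le
    simp only [derIci2] at this
    linarith
  have hgc := hd1.continuousOn
  have hpc := hd2.continuousOn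
  have hg0d : HasDerivWithinAt g (-lam) (Ici 0) 0 := by
    rw [← hp0]; exact (hd1 0 self_mem_Ici).hasDerivWithinAt
  set p := derIci g with hp
  have hexp : ∀ c x : ℝ, HasDerivAt (fun t => Real.exp (c * t)) (Real.exp (c * x) * c) x := by
    intro c x
    simpa using ((hasDerivAt_id x).const_mul c).exp
  have hexpc : ∀ c : ℝ, ContinuousOn (fun t => Real.exp (c * t)) (Ici 0) := fun c => by fun_prop
  have mono : ∀ f f' : ℝ → ℝ, ContinuousOn f (Ici 0) → (∀ x, 0 < x → HasDerivAt f (f' x) x) →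
      (∀ x, 0 < x → 0 ≤ f' x) → MonotoneOn f (Ici 0) := by
    intro f f' hc hd hn
    refine monotoneOn_of_hasDerivWithinAt_nonneg (f' := f') (convex_Ici 0) hc ?_ ?_
    · intro x hx
      rw [interior_Ici] at hx
      exact (hd x hx).hasDerivWithinAt
    · intro x hx
      rw [interior_Ici] at hx
      exact hn x hx
  -- lower bound for p
  have hpl : ∀ x, 0 < x → -lam * Real.exp (-2 * x) ≤ p x := by
    intro x hx
    have := mono (fun t => Real.exp (2 * t) * p t) (fun t => Real.exp (2 * t) * g t ^ 2)
      ((hexpc 2).mul hpc)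
      (fun t ht => ((hexp 2 t).mul (hpd t ht)).congr_deriv (by ring))
      (fun t ht => by positivity) self_mem_Ici (show x ∈ Ici 0 from hx.le) hx.le
    simp only [mul_zero, Real.exp_zero, one_mul, hp0] at this
    have he : Real.exp (-2 * x) * Real.exp (2 * x) = 1 := by
      rw [← Real.exp_add]; simp
    have h3 := mul_le_mul_of_nonneg_left this (Real.exp_pos (-2 * x)).le
    rw [← mul_assoc, he] at h3
    linarith
  have hgl : ∀ x, 0 < x → -(1/2) < g x := by
    intro x hx
    have := mono (fun t => g t - lam / 2 * Real.exp (-2 * t))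
      (fun t => p t - lam / 2 * (Real.exp (-2 * t) * (-2)))
      (hgc.sub ((hexpc (-2)).const_mul _ ))
      (fun t ht => (hgd t ht).sub ((hexp (-2) t).const_mul _))
      (fun t ht => by have := hpl t ht; linarith) self_mem_Ici (show x ∈ Ici 0 from hx.le) hx.le
    simp only [mul_zero, Real.exp_zero, mul_one, hg0] at this
    have := mul_pos h1 (Real.exp_pos (-2 * x))
    linarith
  have hA : ∀ x, 0 < x → 0 ≤ Real.exp (2 * x) * (g x * (g x + p x)) := by
    intro x hx
    have := mono (fun t => Real.exp (2 * t) * (g t * (g t + p t)))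
      (fun t => Real.exp (2 * t) * ((p t + g t) ^ 2 + g t ^ 2 * (1 + g t)))
      ((hexpc 2).mul (hgc.mul (hgc.add hpc)))
      (fun t ht => ((hexp 2 t).mul ((hgd t ht).mul ((hgd t ht).add (hpd t ht)))).congr_deriv
        (by simp; ring))
      (fun t ht => by
        have := hgl t ht
        have : 0 < 1 + g t := by linarith
        positivity) self_mem_Ici (show x ∈ Ici 0 from hx.le) hx.le
    simpa [hg0] using this
  have hB := mono (fun t => Real.exp (2 * t) * g t ^ 2)
      (fun t => 2 * (Real.exp (2 * t) * (g t * (g t + p t))))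
      ((hexpc 2).mul (hgc.pow 2))
      (fun t ht => ((hexp 2 t).mul ((hgd t ht).pow 2)).congr_deriv (by simp; ring))
      (fun t ht => by have := hA t ht; linarith)
  have hneg0 : ∀ᶠ y in 𝓝[>] (0:ℝ), g y < 0 := by
    have h := hg0d.Ioi_of_Ici
    rw [hasDerivWithinAt_iff_tendsto_slope' (by simp)] at h
    filter_upwards [h.eventually_lt_const (show -lam < 0 by linarith), self_mem_nhdsWithin]
      with y hy hy0
    simp only [slope_def_field, hg0, sub_zero] at hy
    have hy0' : 0 < y := hy0
    by_contra hc
    push Not at hc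
    have : 0 ≤ g y / y := by positivity
    linarith
  have hgneg : ∀ x, 0 < x → g x < 0 := by
    intro x hx
    obtain ⟨y, hy, hy0, hyx⟩ := (hneg0.and (Ioo_mem_nhdsGT hx)).exists
    by_contra hc
    push Not at hc
    obtain ⟨z, hz, hz0⟩ := intermediate_value_Icc hyx.le
      (hgc.mono fun t ht => hy0.le.trans ht.1) (show (0:ℝ) ∈ Icc (g y) (g x) from ⟨hy.le, hc⟩)
    have h := hB (show y ∈ Ici 0 from hy0.le) (show z ∈ Ici 0 from hy0.le.trans hz.1) hz.1
    simp only [hz0] at h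
    have : 0 < Real.exp (2 * y) * g y ^ 2 := mul_pos (Real.exp_pos _) (by nlinarith)
    simp at h
    linarith
  refine ⟨hgd, hpd, hgneg, fun x hx => ?_⟩
  have := mono (fun t => -(Real.exp (3/2 * t) * (p t + g t / 2)))
      (fun t => Real.exp (3/2 * t) * (- g t * (3/4 + g t)))
      ((hexpc (3/2)).mul (hpc.add (hgc.div_const 2))).neg
      (fun t ht => (((hexp (3/2) t).mul ((hpd t ht).add ((hgd t ht).div_const 2)))).neg.congr_deriv
        (by simp; ring))
      (fun t ht => by
        have := hgl t ht
        have h3 : 0 < 3/4 + g t := by linarith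
        have h4 : 0 < - g t := by have := hgneg t ht; linarith
        positivity) self_mem_Ici (show x ∈ Ici 0 from hx.le) hx.le
  simp only [mul_zero, Real.exp_zero, hg0, hp0] at this
  have he := Real.exp_pos (3/2 * x)
  by_contra hc
  push Not at hc
  have : 0 ≤ Real.exp (3/2 * x) * (p x + g x / 2) := mul_nonneg he.le (by linarith)
  linarith

/-- Second-order asymptotics of `g_λ` for `λ ∈ (0,1)`: there is a constant
`C_λ` such that `g_λ(x) = -2/x + (2 log x + C_λ)/x² + o(1/x²)` and
`g_λ'(x) = 2/x² - (4 log x + 2C_λ - 2)/x³ + o(1/x³)` as `x → ∞`. -/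
theorem gLambda_second_order_asymptotics (lam : ℝ) (h1 : 0 < lam) (h2 : lam < 1)
    (g : ℝ → ℝ) (hg : IsGSol lam g) :
    ∃ C : ℝ,
      ((fun x => g x - (-2 / x + (2 * Real.log x + C) / x ^ 2)) =o[Filter.atTop]
        fun x => 1 / x ^ 2) ∧
      ((fun x => derIci g x - (2 / x ^ 2 - (4 * Real.log x + 2 * C - 2) / x ^ 3))
        =o[Filter.atTop] fun x => 1 / x ^ 3) := by
  obtain ⟨hgd, hpd, hneg, hpu⟩ := aux_sol lam h1 h2 g hg
  have hw : ∀ x, 0 < x → 0 < (fun x => -(g x)⁻¹) x := fun x hx => by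
    have := inv_lt_zero.2 (hneg x hx)
    simp only
    linarith
  obtain ⟨K, hK, hwx, hr⟩ := aux_main_s12 (fun x => -(g x)⁻¹) (fun x => derIci g x / g x ^ 2) hw
    (fun x hx => ((hgd x hx).inv (hneg x hx).ne).neg.congr_deriv (by ring))
    (fun x hx => by
      have h0 := (hneg x hx).ne
      refine ((hpd x hx).div ((hgd x hx).pow 2) (pow_ne_zero 2 h0)).congr_deriv ?_
      simp
      field_simp
      ring)
    (fun x hx => by
      have h0 := hneg x hx
      have e : derIci g x / g x ^ 2 / (-(g x)⁻¹) = derIci g x / (- g x) := by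
        have := h0.ne
        field_simp
      simp only [e]
      rw [div_lt_iff₀ (by linarith)]
      have := hpu x hx
      linarith)
  obtain ⟨ha, hb⟩ := aux_final _ _ K hK hwx hr hw
  have hpos : ∀ᶠ x : ℝ in atTop, 0 < x := eventually_gt_atTop 0
  refine ⟨4 * K, ?_, ?_⟩
  · rw [isLittleO_iff_tendsto' (hpos.mono fun x hx h => absurd h (by positivity))]
    refine ha.congr' ?_
    filter_upwards [hpos] with x hx
    have := (hneg x hx).ne
    field_simp
  · rw [isLittleO_iff_tendsto' (hpos.mono fun x hx h => absurd h (by positivity))]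
    refine hb.congr' ?_
    filter_upwards [hpos] with x hx
    have := (hneg x hx).ne
    field_simp
end

section
/- For every a ∈ (0,1) and every 0 < c < C < ∞ there exists δ > 0 such that the following holds: for every T > 1 and every nonnegative random variable X (on any probability space) satisfying e^{−δ}/(1−λ) ≤ E[e^{λX}] ≤ e^{δ}/(1−λ) for every λ ∈ [1 − C/T, 1 − c/T], one has P( (1−a)T ≤ X ≤ (1+a)T ) ≥ δ · a · T · exp( −(1+a) T ). -/
open MeasureTheory

/-- Span of the decaying exponentials with rates in `[0, L]`. -/
noncomputable def expSpan (L : ℝ) : Submodule ℝ (ℝ → ℝ) :=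
  Submodule.span ℝ {f | ∃ t, 0 ≤ t ∧ t ≤ L ∧ f = fun y => Real.exp (-t * y)}

lemma exp_mem_expSpan {L t : ℝ} (h0 : 0 ≤ t) (h1 : t ≤ L) :
    (fun y => Real.exp (-t * y)) ∈ expSpan L :=
  Submodule.subset_span ⟨t, h0, h1, rfl⟩

lemma expSpan_mono {L M : ℝ} (h : L ≤ M) : expSpan L ≤ expSpan M := by
  apply Submodule.span_mono
  rintro f ⟨t, h0, h1, rfl⟩
  exact ⟨t, h0, h1.trans h, rfl⟩

lemma hasDerivAt_e (t y : ℝ) :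
    HasDerivAt (fun y => Real.exp (-t * y)) (-t * Real.exp (-t * y)) y := by
  have h := ((hasDerivAt_id y).const_mul (-t)).exp
  simp only [id, mul_one] at h
  rw [mul_comm]
  exact h

/-- Solve the linear ODE inside the exponential span. -/
lemma expSpan_ode {L l : ℝ} (hL : L < l) (G : ℝ → ℝ) (hG : G ∈ expSpan L) :
    ∃ H ∈ expSpan l, H 0 = 0 ∧ ∀ y, HasDerivAt H (G y - l * H y) y := by
  unfold expSpan at hG
  induction hG using Submodule.span_induction with
  | mem f hf =>
    obtain ⟨t, h0, h1, rfl⟩ := hf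
    refine ⟨(l - t)⁻¹ • ((fun y => Real.exp (-t * y)) - (fun y => Real.exp (-l * y))),
      Submodule.smul_mem _ _ (Submodule.sub_mem _ (exp_mem_expSpan h0 (by linarith))
        (exp_mem_expSpan (by linarith) le_rfl)), by simp, fun y => ?_⟩
    have hne : l - t ≠ 0 := by
      have : 0 < l - t := by linarith
      exact this.ne'
    have := ((hasDerivAt_e t y).sub (hasDerivAt_e l y)).const_smul (l - t)⁻¹
    refine this.congr_deriv ?_
    simp only [Pi.smul_apply, Pi.sub_apply, smul_eq_mul]
    field_simp
    ring
  | zero => exact ⟨0, Submodule.zero_mem _, rfl, fun y => by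
      simpa using hasDerivAt_const y (0 : ℝ)⟩
  | add f g _ _ hf hg =>
    obtain ⟨F, hF, hF0, hF'⟩ := hf
    obtain ⟨K, hK, hK0, hK'⟩ := hg
    refine ⟨F + K, Submodule.add_mem _ hF hK, by simp [hF0, hK0], fun y => ?_⟩
    refine ((hF' y).add (hK' y)).congr_deriv ?_
    simp only [Pi.add_apply]; ring
  | smul r f _ hf =>
    obtain ⟨F, hF, hF0, hF'⟩ := hf
    refine ⟨r • F, Submodule.smul_mem _ _ hF, by simp [hF0], fun y => ?_⟩
    refine ((hF' y).const_smul r).congr_deriv ?_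
    simp only [Pi.smul_apply, smul_eq_mul]; ring

lemma ode_bound_upper {l M : ℝ} (hM : 0 ≤ M) (Q P : ℝ → ℝ) (hQ0 : Q 0 = 0)
    (hQ : ∀ y, HasDerivAt Q (P y - l * Q y) y) (hP : ∀ y, 0 ≤ y → P y ≤ l * M)
    (y : ℝ) (hy : 0 ≤ y) : Q y ≤ M := by
  have hd : ∀ y, HasDerivAt (fun y => Real.exp (-(-l) * y) * (M - Q y))
      (Real.exp (-(-l) * y) * (l * M - P y)) y := by
    intro y
    refine ((hasDerivAt_e (-l) y).mul ((hasDerivAt_const y M).sub (hQ y))).congr_deriv ?_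
    simp only [Pi.sub_apply]
    ring
  have hmono : MonotoneOn (fun y => Real.exp (-(-l) * y) * (M - Q y)) (Set.Ici 0) := by
    apply monotoneOn_of_deriv_nonneg (convex_Ici 0)
    · exact fun y _ => (hd y).continuousAt.continuousWithinAt
    · exact fun y _ => (hd y).differentiableAt.differentiableWithinAt
    · intro y hy
      rw [interior_Ici] at hy
      rw [(hd y).deriv]
      have := hP y (le_of_lt hy)
      exact mul_nonneg (Real.exp_pos _).le (by linarith)
  have h := hmono (Set.mem_Ici.2 le_rfl) (Set.mem_Ici.2 hy) hy
  simp only [hQ0, mul_zero, Real.exp_zero, sub_zero, one_mul] at h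
  have h2 : 0 ≤ M - Q y := nonneg_of_mul_nonneg_right (hM.trans h) (Real.exp_pos _)
  linarith

lemma ode_bound {l M : ℝ} (hM : 0 ≤ M) (Q P : ℝ → ℝ) (hQ0 : Q 0 = 0)
    (hQ : ∀ y, HasDerivAt Q (P y - l * Q y) y) (hP : ∀ y, 0 ≤ y → |P y| ≤ l * M)
    (y : ℝ) (hy : 0 ≤ y) : |Q y| ≤ M := by
  rw [abs_le]
  constructor
  · have := ode_bound_upper hM (-Q) (-P) (by simp [hQ0]) (l := l) (fun y => by
      refine (hQ y).neg.congr_deriv ?_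
      simp only [Pi.neg_apply]; ring)
      (fun y hy => (neg_le_abs _).trans (hP y hy)) y hy
    simp only [Pi.neg_apply] at this
    linarith
  · exact ode_bound_upper hM Q P hQ0 hQ (fun y hy => (le_abs_self _).trans (hP y hy)) y hy

/-- Muntz type iteration. -/
lemma muntz_iter {L q : ℝ} (hL : 0 < L) (hq0 : L < q) (hq : q ≤ 5 / 4 * L) (n : ℕ) :
    ∃ G ∈ expSpan (L * (1 - 1 / (4 * ((n : ℝ) + 1)))), ∀ y, 0 ≤ y →
      |Real.exp (-q * y) - G y| ≤ (2 / 3) ^ n := by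
  induction n with
  | zero =>
    refine ⟨0, Submodule.zero_mem _, fun y hy => ?_⟩
    simp only [Pi.zero_apply, sub_zero, pow_zero, abs_of_pos (Real.exp_pos _)]
    rw [Real.exp_le_one_iff]
    nlinarith [mul_nonneg (hL.trans hq0).le hy]
  | succ n ih =>
    obtain ⟨G, hG, hGb⟩ := ih
    set l : ℝ := L * (1 - 1 / (4 * (((n + 1 : ℕ) : ℝ) + 1))) with hl
    have hn : (0 : ℝ) ≤ n := Nat.cast_nonneg n
    have hlt : L * (1 - 1 / (4 * ((n : ℝ) + 1))) < l := by
      rw [hl]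
      apply mul_lt_mul_of_pos_left _ hL
      push_cast
      have : 1 / (4 * ((n : ℝ) + 1 + 1)) < 1 / (4 * ((n : ℝ) + 1)) := by
        apply one_div_lt_one_div_of_lt <;> linarith
      linarith
    have hl34 : 3 / 4 * L ≤ l := by
      have : 1 / (4 * (((n + 1 : ℕ) : ℝ) + 1)) ≤ 1 / 4 := by
        apply one_div_le_one_div_of_le (by norm_num)
        push_cast; linarith
      rw [hl]; nlinarith
    have hlL : l ≤ L := by
      have : 0 ≤ 1 / (4 * (((n + 1 : ℕ) : ℝ) + 1)) := by positivity
      rw [hl]; nlinarith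
    obtain ⟨H, hH, hH0, hH'⟩ := expSpan_ode hlt G hG
    refine ⟨(fun y => Real.exp (-l * y)) + (l - q) • H, Submodule.add_mem _
      (exp_mem_expSpan (by linarith) le_rfl) (Submodule.smul_mem _ _ hH), ?_⟩
    intro y hy
    refine ode_bound (l := l) (M := (2 / 3) ^ (n + 1)) (by positivity)
      (fun y => Real.exp (-q * y) - ((fun y => Real.exp (-l * y)) + (l - q) • H) y)
      (fun y => (l - q) * (Real.exp (-q * y) - G y)) ?_ ?_ ?_ y hy
    · simp [hH0]
    · intro y
      refine ((hasDerivAt_e q y).sub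
        ((hasDerivAt_e l y).add ((hH' y).const_smul (l - q)))).congr_deriv ?_
      simp only [Pi.add_apply, Pi.smul_apply, smul_eq_mul]
      ring
    · intro y hy
      rw [abs_mul, abs_of_nonpos (by linarith : l - q ≤ 0)]
      calc -(l - q) * |Real.exp (-q * y) - G y| ≤ (2 / 3 * l) * (2 / 3) ^ n := by
            apply mul_le_mul _ (hGb y hy) (abs_nonneg _) (by linarith)
            linarith
        _ = _ := by rw [pow_succ]; ring

/-- Uniform approximability on `[0, ∞)` by elements of `expSpan L`. -/
def ExpApprox (L : ℝ) (F : ℝ → ℝ) : Prop :=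
  ∀ ε : ℝ, 0 < ε → ∃ G ∈ expSpan L, ∀ y, 0 ≤ y → |F y - G y| ≤ ε

lemma expApprox_e {L q : ℝ} (hL : 0 < L) (h0 : 0 ≤ q) (hq : q ≤ 5 / 4 * L) :
    ExpApprox L (fun y => Real.exp (-q * y)) := by
  intro ε hε
  rcases le_or_gt q L with h | h
  · exact ⟨_, exp_mem_expSpan h0 h, fun y _ => by simpa using hε.le⟩
  · obtain ⟨n, hn⟩ := exists_pow_lt_of_lt_one hε (by norm_num : (2 / 3 : ℝ) < 1)
    obtain ⟨G, hG, hb⟩ := muntz_iter hL h hq n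
    refine ⟨G, expSpan_mono ?_ hG, fun y hy => (hb y hy).trans hn.le⟩
    have : 0 ≤ 1 / (4 * ((n : ℝ) + 1)) := by positivity
    nlinarith

lemma expApprox_span {L M : ℝ} (hL : 0 < L) (hM : M ≤ 5 / 4 * L) (F : ℝ → ℝ)
    (hF : F ∈ expSpan M) : ExpApprox L F := by
  unfold expSpan at hF
  induction hF using Submodule.span_induction with
  | mem f hf =>
    obtain ⟨t, h0, h1, rfl⟩ := hf
    exact expApprox_e hL h0 (h1.trans hM)
  | zero => exact fun ε hε => ⟨0, Submodule.zero_mem _, fun y _ => by simpa using hε.le⟩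
  | add f g _ _ hf hg =>
    intro ε hε
    obtain ⟨F, hF, hF'⟩ := hf (ε / 2) (by linarith)
    obtain ⟨K, hK, hK'⟩ := hg (ε / 2) (by linarith)
    refine ⟨F + K, Submodule.add_mem _ hF hK, fun y hy => ?_⟩
    have h1 := hF' y hy
    have h2 := hK' y hy
    simp only [Pi.add_apply]
    rw [abs_le] at *
    constructor <;> linarith
  | smul r f _ hf =>
    intro ε hε
    obtain ⟨F, hF, hF'⟩ := hf (ε / (|r| + 1)) (by positivity)
    refine ⟨r • F, Submodule.smul_mem _ _ hF, fun y hy => ?_⟩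
    have h1 := hF' y hy
    simp only [Pi.smul_apply, smul_eq_mul]
    rw [← mul_sub, abs_mul]
    calc |r| * |f y - F y| ≤ (|r| + 1) * (ε / (|r| + 1)) := by
          apply mul_le_mul _ h1 (abs_nonneg _) (by positivity)
          linarith
      _ = ε := by field_simp

lemma expApprox_pow {L : ℝ} (hL : 0 < L) (n : ℕ) (F : ℝ → ℝ)
    (hF : F ∈ expSpan ((5 / 4) ^ n * L)) : ExpApprox L F := by
  induction n generalizing F with
  | zero => exact fun ε hε => ⟨F, by simpa using hF, fun y _ => by simpa using hε.le⟩
  | succ n ih =>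
    intro ε hε
    obtain ⟨G, hG, hG'⟩ := expApprox_span (L := (5 / 4) ^ n * L) (by positivity)
      (by rw [pow_succ]; linarith) F hF (ε / 2) (by linarith)
    obtain ⟨K, hK, hK'⟩ := ih G hG (ε / 2) (by linarith)
    refine ⟨K, hK, fun y hy => ?_⟩
    have h1 := hG' y hy
    have h2 := hK' y hy
    rw [abs_le] at *
    constructor <;> linarith

lemma expApprox_all {L M : ℝ} (hL : 0 < L) (F : ℝ → ℝ) (hF : F ∈ expSpan M) :
    ExpApprox L F := by
  obtain ⟨n, hn⟩ := pow_unbounded_of_one_lt (M / L) (by norm_num : (1 : ℝ) < 5 / 4)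
  apply expApprox_pow hL n
  apply expSpan_mono _ hF
  rw [div_lt_iff₀ hL] at hn
  exact hn.le

lemma poly_mem (p : Polynomial ℝ) :
    (fun y => p.eval (Real.exp (-y))) ∈ expSpan p.natDegree := by
  have : (fun y => p.eval (Real.exp (-y))) =
      ∑ i ∈ Finset.range (p.natDegree + 1), p.coeff i • (fun y => Real.exp (-(i : ℝ) * y)) := by
    funext y
    rw [Polynomial.eval_eq_sum_range, Finset.sum_apply]
    apply Finset.sum_congr rfl
    intro i _
    simp only [Pi.smul_apply, smul_eq_mul]
    rw [← Real.exp_nat_mul]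
    congr 2; ring
  rw [this]
  apply Submodule.sum_mem
  intro i hi
  apply Submodule.smul_mem
  apply exp_mem_expSpan (Nat.cast_nonneg i)
  have := Finset.mem_range.1 hi
  exact_mod_cast (by omega : i ≤ p.natDegree)

lemma expApprox_cont {L : ℝ} (hL : 0 < L) (φ : ℝ → ℝ) (hφ : Continuous φ) :
    ExpApprox L (fun y => φ (Real.exp (-y))) := by
  intro ε hε
  obtain ⟨p, hp⟩ := exists_polynomial_near_of_continuousOn 0 1 φ hφ.continuousOn (ε / 2)
    (by linarith)
  obtain ⟨G, hG, hG'⟩ := expApprox_all hL _ (poly_mem p) (ε / 2) (by linarith)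
  refine ⟨G, hG, fun y hy => ?_⟩
  have h1 := hp (Real.exp (-y)) ⟨(Real.exp_pos _).le, by rw [Real.exp_le_one_iff]; linarith⟩
  have h2 := hG' y hy
  rw [abs_lt] at h1
  rw [abs_le] at *
  constructor <;> linarith

/-- The comparison of the weighted transform with the Lebesgue one. -/
lemma transform_compare {c C : ℝ} (hc : 0 < c) (G : ℝ → ℝ) (hG : G ∈ expSpan (C - c)) :
    IntegrableOn (fun y => Real.exp (-c * y) * G y) (Set.Ioi 0) ∧ ∃ K : ℝ, 0 ≤ K ∧
    ∀ (η : ℝ), 0 ≤ η → ∀ (Ω : Type) [MeasurableSpace Ω] (μ : Measure Ω) (w Y : Ω → ℝ),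
      (∀ s, c ≤ s → s ≤ C → Integrable (fun ω => w ω * Real.exp (-s * Y ω)) μ ∧
        |(∫ ω, w ω * Real.exp (-s * Y ω) ∂μ) - 1 / s| ≤ η / s) →
      Integrable (fun ω => w ω * (Real.exp (-c * Y ω) * G (Y ω))) μ ∧
      |(∫ ω, w ω * (Real.exp (-c * Y ω) * G (Y ω)) ∂μ) -
        ∫ y in Set.Ioi 0, Real.exp (-c * y) * G y| ≤ K * η := by
  unfold expSpan at hG
  induction hG using Submodule.span_induction with
  | mem f hf =>
    obtain ⟨t, h0, h1, rfl⟩ := hf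
    have hs : 0 < c + t := by linarith
    have key : ∀ y : ℝ, Real.exp (-c * y) * Real.exp (-t * y) = Real.exp (-(c + t) * y) := by
      intro y; rw [← Real.exp_add]; congr 1; ring
    simp only [key]
    refine ⟨exp_neg_integrableOn_Ioi 0 hs, 1 / (c + t), by positivity, ?_⟩
    intro η hη Ω _ μ w Y h
    obtain ⟨h2, h3⟩ := h (c + t) (by linarith) (by linarith)
    refine ⟨h2, ?_⟩
    have : ∫ y in Set.Ioi (0 : ℝ), Real.exp (-(c + t) * y) = 1 / (c + t) := by
      rw [integral_exp_mul_Ioi (by linarith) 0, mul_zero, Real.exp_zero, neg_div_neg_eq]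
    rw [this]
    refine h3.trans (le_of_eq ?_)
    ring
  | zero =>
    refine ⟨by simp [IntegrableOn], 0, le_rfl, ?_⟩
    intro η hη Ω _ μ w Y h
    simp
  | add f g _ _ hf hg =>
    obtain ⟨hf1, K1, hK1, hf2⟩ := hf
    obtain ⟨hg1, K2, hK2, hg2⟩ := hg
    simp only [Pi.add_apply, mul_add]
    refine ⟨hf1.add hg1, K1 + K2, by positivity, ?_⟩
    intro η hη Ω _ μ w Y h
    obtain ⟨a1, a2⟩ := hf2 η hη Ω μ w Y h
    obtain ⟨b1, b2⟩ := hg2 η hη Ω μ w Y h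
    refine ⟨a1.add b1, ?_⟩
    rw [integral_add a1 b1, integral_add hf1 hg1]
    rw [abs_le] at *
    constructor <;> linarith
  | smul r f _ hf =>
    obtain ⟨hf1, K1, hK1, hf2⟩ := hf
    simp only [Pi.smul_apply, smul_eq_mul, mul_left_comm _ r]
    refine ⟨hf1.const_mul r, |r| * K1, by positivity, ?_⟩
    intro η hη Ω _ μ w Y h
    obtain ⟨a1, a2⟩ := hf2 η hη Ω μ w Y h
    refine ⟨a1.const_mul r, ?_⟩
    rw [integral_const_mul, integral_const_mul, ← mul_sub, abs_mul, mul_assoc]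
    exact mul_le_mul_of_nonneg_left a2 (abs_nonneg _)

/-- The tent function. -/
noncomputable def tent (a x : ℝ) : ℝ :=
  max 0 (min (x - Real.exp (-(1 + a))) (Real.exp (-(1 - a)) - x))

lemma tent_cont (a : ℝ) : Continuous (tent a) := by
  unfold tent; fun_prop

lemma tent_nonneg (a x : ℝ) : 0 ≤ tent a x := le_max_left _ _

lemma tent_le_one {a x : ℝ} (hx : x ≤ 1) : tent a x ≤ 1 := by
  unfold tent
  apply max_le zero_le_one
  refine (min_le_left _ _).trans ?_
  have := Real.exp_pos (-(1 + a))
  linarith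

lemma tent_zero {a y : ℝ} (h : ¬ (1 - a ≤ y ∧ y ≤ 1 + a)) : tent a (Real.exp (-y)) = 0 := by
  unfold tent
  apply max_eq_left
  by_cases h1 : 1 - a ≤ y
  · have h2 : 1 + a < y := by
      by_contra h3
      exact h ⟨h1, not_lt.1 h3⟩
    refine (min_le_left _ _).trans ?_
    have : Real.exp (-y) ≤ Real.exp (-(1 + a)) := Real.exp_le_exp.2 (by linarith)
    linarith
  · refine (min_le_right _ _).trans ?_
    have : Real.exp (-(1 - a)) ≤ Real.exp (-y) := Real.exp_le_exp.2 (by linarith)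
    linarith

lemma tent_pos {a : ℝ} (ha : 0 < a) : 0 < tent a (Real.exp (-1)) := by
  unfold tent
  apply lt_max_of_lt_right
  apply lt_min <;> rw [sub_pos] <;> apply Real.exp_lt_exp.2 <;> linarith

lemma tent_integrable {a c : ℝ} (hc : 0 < c) :
    IntegrableOn (fun y => Real.exp (-c * y) * tent a (Real.exp (-y))) (Set.Ioi 0) := by
  refine Integrable.mono' (exp_neg_integrableOn_Ioi 0 hc) ?_ ?_
  · have := tent_cont a
    exact (by fun_prop : Continuous fun y =>
      Real.exp (-c * y) * tent a (Real.exp (-y))).aestronglyMeasurable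
  · filter_upwards [ae_restrict_mem measurableSet_Ioi] with y hy
    rw [Real.norm_eq_abs, abs_of_nonneg (mul_nonneg (Real.exp_pos _).le (tent_nonneg _ _))]
    refine mul_le_of_le_one_right (Real.exp_pos _).le (tent_le_one ?_)
    rw [Real.exp_le_one_iff]
    have : 0 < y := hy
    linarith

lemma tent_integral_pos {a c : ℝ} (ha : 0 < a) (hc : 0 < c) :
    0 < ∫ y in Set.Ioi 0, Real.exp (-c * y) * tent a (Real.exp (-y)) := by
  have hcont : Continuous fun y => Real.exp (-c * y) * tent a (Real.exp (-y)) := by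
    have := tent_cont a
    fun_prop
  rw [setIntegral_pos_iff_support_of_nonneg_ae]
  · have hopen : IsOpen (Function.support (fun y => Real.exp (-c * y) * tent a (Real.exp (-y)))
        ∩ Set.Ioi 0) := hcont.isOpen_support.inter isOpen_Ioi
    refine hopen.measure_pos volume ?_
    refine ⟨1, ?_, by simp⟩
    exact (mul_pos (Real.exp_pos _) (tent_pos ha)).ne'
  · exact Filter.Eventually.of_forall fun y =>
      mul_nonneg (Real.exp_pos _).le (tent_nonneg _ _)
  · exact tent_integrable hc

lemma exp_sub_one_le {d : ℝ} (h0 : 0 ≤ d) (h1 : d ≤ 1 / 2) : Real.exp d - 1 ≤ 2 * d := by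
  have h := Real.add_one_le_exp (-d)
  have hp := Real.exp_pos d
  have h2 : Real.exp d * Real.exp (-d) = 1 := by rw [← Real.exp_add]; simp
  nlinarith

/-- Finitary Tauberian theorem: if the moment generating function of a
nonnegative random variable `X` agrees with that of an `Exponential(1)`
random variable within a factor `e^{±δ}` for all `λ ∈ [1 - C/T, 1 - c/T]`,
then `X` lies in `[(1-a)T, (1+a)T]` with probability at least
`δ a T e^{-(1+a)T}`. -/
theorem finitary_tauberian (a c C : ℝ) (ha0 : 0 < a) (ha1 : a < 1)
    (hc : 0 < c) (hcC : c < C) :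
    ∃ δ : ℝ, 0 < δ ∧
      ∀ T : ℝ, 1 < T →
      ∀ (Ω : Type) [MeasurableSpace Ω] (μ : Measure Ω), IsProbabilityMeasure μ →
      ∀ X : Ω → ℝ, Measurable X → (∀ ω, 0 ≤ X ω) →
      (∀ lam : ℝ, 1 - C / T ≤ lam → lam ≤ 1 - c / T →
        Real.exp (-δ) / (1 - lam) ≤ (∫ ω, Real.exp (lam * X ω) ∂μ) ∧
        (∫ ω, Real.exp (lam * X ω) ∂μ) ≤ Real.exp δ / (1 - lam)) →
      ENNReal.ofReal (δ * a * T * Real.exp (-(1 + a) * T)) ≤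
        μ {ω | (1 - a) * T ≤ X ω ∧ X ω ≤ (1 + a) * T} := by
  set J := ∫ y in Set.Ioi 0, Real.exp (-c * y) * tent a (Real.exp (-y)) with hJ
  have hJpos : 0 < J := tent_integral_pos ha0 hc
  set ε := c * J / 8 with hε
  have hεpos : 0 < ε := by positivity
  obtain ⟨G, hG, hGb⟩ := expApprox_cont (sub_pos.2 hcC) (tent a) (tent_cont a) ε hεpos
  beta_reduce at hGb
  obtain ⟨hGint, K, hK, hcomp⟩ := transform_compare hc G hG
  -- Lebesgue lower bound
  have hlow : J - J / 8 ≤ ∫ y in Set.Ioi 0, Real.exp (-c * y) * G y := by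
    have h1 : ∫ y in Set.Ioi (0 : ℝ), ε * Real.exp (-c * y) = J / 8 := by
      rw [integral_const_mul, integral_exp_mul_Ioi (by linarith) 0, hε]
      simp
      field_simp
    rw [← h1, hJ, ← integral_sub (tent_integrable hc)
      ((exp_neg_integrableOn_Ioi 0 hc).const_mul ε)]
    apply setIntegral_mono_on ((tent_integrable hc).sub
      ((exp_neg_integrableOn_Ioi 0 hc).const_mul ε)) hGint measurableSet_Ioi
    intro y hy
    have h2 := (abs_le.1 (hGb y (le_of_lt hy))).2
    have := Real.exp_pos (-c * y)
    simp only [Pi.sub_apply] at h2 ⊢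
    nlinarith
  obtain ⟨δ, hδ, hδ1, hδ2, hδ3⟩ : ∃ δ : ℝ, 0 < δ ∧ δ ≤ 1 / 2 ∧ K * (2 * δ) ≤ J / 8 ∧
      δ ≤ J / 4 := by
    refine ⟨min (1 / 2) (min (J / (16 * (K + 1))) (J / 4)), by positivity, min_le_left _ _, ?_,
      (min_le_right _ _).trans (min_le_right _ _)⟩
    have h1 : min (1 / 2) (min (J / (16 * (K + 1))) (J / 4)) ≤ J / (16 * (K + 1)) :=
      (min_le_right _ _).trans (min_le_left _ _)
    calc K * (2 * min (1 / 2) (min (J / (16 * (K + 1))) (J / 4)))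
        ≤ (K + 1) * (2 * (J / (16 * (K + 1)))) := by
          apply mul_le_mul (by linarith) (by linarith) (by positivity) (by positivity)
      _ = J / 8 := by field_simp; norm_num
  refine ⟨δ, hδ, ?_⟩
  intro T hT Ω _ μ hμ X hX hX0 hyp
  have hT0 : 0 < T := by linarith
  have hexp := exp_sub_one_le hδ.le hδ1
  have hη : 0 ≤ Real.exp δ - 1 := by
    have := Real.add_one_le_exp δ
    linarith
  have hw : ∀ s, c ≤ s → s ≤ C →
      Integrable (fun ω => (Real.exp (X ω) / T) * Real.exp (-s * (X ω / T))) μ ∧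
      |(∫ ω, (Real.exp (X ω) / T) * Real.exp (-s * (X ω / T)) ∂μ) - 1 / s|
        ≤ (Real.exp δ - 1) / s := by
    intro s hs1 hs2
    have hs : 0 < s := by linarith
    obtain ⟨h1, h2⟩ := hyp (1 - s / T) (by gcongr) (by gcongr)
    have hden : 1 - (1 - s / T) = s / T := by ring
    rw [hden] at h1 h2
    have hint : Integrable (fun ω => Real.exp ((1 - s / T) * X ω)) μ := by
      by_contra hcon
      rw [integral_undef hcon] at h1
      have : 0 < Real.exp (-δ) / (s / T) := by positivity
      linarith
    have heq : (fun ω => (Real.exp (X ω) / T) * Real.exp (-s * (X ω / T))) =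
        fun ω => T⁻¹ * Real.exp ((1 - s / T) * X ω) := by
      funext ω
      rw [div_mul_eq_mul_div, ← Real.exp_add, div_eq_inv_mul]
      congr 2; ring
    rw [heq]
    refine ⟨hint.const_mul _, ?_⟩
    rw [integral_const_mul]
    set I := ∫ ω, Real.exp ((1 - s / T) * X ω) ∂μ
    have h1' : Real.exp (-δ) / s ≤ T⁻¹ * I := by
      calc Real.exp (-δ) / s = T⁻¹ * (Real.exp (-δ) / (s / T)) := by field_simp
        _ ≤ _ := by gcongr
    have h2' : T⁻¹ * I ≤ Real.exp δ / s := by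
      calc T⁻¹ * I ≤ T⁻¹ * (Real.exp δ / (s / T)) := by gcongr
        _ = _ := by field_simp
    have h3 : 2 ≤ Real.exp δ + Real.exp (-δ) := by
      have := Real.add_one_le_exp δ
      have := Real.add_one_le_exp (-δ)
      linarith
    have h4 : 2 / s ≤ Real.exp δ / s + Real.exp (-δ) / s := by
      rw [← add_div]; gcongr
    have h5 : 2 / s = 1 / s + 1 / s := by ring
    rw [abs_le, sub_div]
    constructor <;> linarith
  obtain ⟨hi, hb⟩ := hcomp (Real.exp δ - 1) hη Ω μ (fun ω => Real.exp (X ω) / T)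
    (fun ω => X ω / T) hw
  obtain ⟨hci, hcb⟩ := hw c le_rfl hcC.le
  set E := {ω | (1 - a) * T ≤ X ω ∧ X ω ≤ (1 + a) * T} with hE
  have hEm : MeasurableSet E :=
    (measurableSet_le measurable_const hX).inter (measurableSet_le hX measurable_const)
  set B := Real.exp ((1 + a) * T) / T with hB
  have hupper : (∫ ω, Real.exp (X ω) / T * (Real.exp (-c * (X ω / T)) * G (X ω / T)) ∂μ) ≤
      ε * (∫ ω, Real.exp (X ω) / T * Real.exp (-c * (X ω / T)) ∂μ) + B * μ.real E := by
    have hind : Integrable (E.indicator (fun _ => B)) μ :=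
      (integrable_const B).indicator hEm
    have : B * μ.real E = ∫ ω, E.indicator (fun _ => B) ω ∂μ := by
      rw [integral_indicator_const B hEm, smul_eq_mul, mul_comm]
    rw [this, ← integral_const_mul, ← integral_add (hci.const_mul ε) hind]
    apply integral_mono hi ((hci.const_mul ε).add hind)
    intro ω
    have hy : 0 ≤ X ω / T := div_nonneg (hX0 ω) hT0.le
    have hg := (abs_le.1 (hGb _ hy)).1
    simp only [Pi.add_apply]
    have hwpos : 0 < Real.exp (X ω) / T := by positivity
    have hep := Real.exp_pos (-c * (X ω / T))
    have hstep : Real.exp (X ω) / T * (Real.exp (-c * (X ω / T)) * G (X ω / T)) ≤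
        ε * (Real.exp (X ω) / T * Real.exp (-c * (X ω / T))) +
        Real.exp (X ω) / T * Real.exp (-c * (X ω / T)) * tent a (Real.exp (-(X ω / T))) := by
      have := mul_pos hwpos hep
      nlinarith
    refine hstep.trans (add_le_add le_rfl ?_)
    by_cases hω : ω ∈ E
    · rw [Set.indicator_of_mem hω]
      have e1 : Real.exp (X ω) / T ≤ B := by
        rw [hB]
        have := hω.2
        gcongr
      have e2 : Real.exp (-c * (X ω / T)) ≤ 1 := by
        rw [Real.exp_le_one_iff]
        nlinarith
      have e3 : tent a (Real.exp (-(X ω / T))) ≤ 1 := tent_le_one (by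
        rw [Real.exp_le_one_iff]; linarith)
      calc _ ≤ Real.exp (X ω) / T * 1 * 1 := by
            gcongr
            exact tent_nonneg _ _
        _ ≤ B := by linarith
    · rw [Set.indicator_of_notMem hω, tent_zero, mul_zero]
      rintro ⟨g1, g2⟩
      exact hω ⟨(le_div_iff₀ hT0).1 g1, (div_le_iff₀ hT0).1 g2⟩
  have hbl := (abs_le.1 hb).1
  have hcu : ε * (∫ ω, Real.exp (X ω) / T * Real.exp (-c * (X ω / T)) ∂μ) ≤ J / 4 := by
    have h1 := (abs_le.1 hcb).2
    have h2 : (∫ ω, Real.exp (X ω) / T * Real.exp (-c * (X ω / T)) ∂μ) ≤ 2 / c := by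
      have : (Real.exp δ - 1) / c ≤ 1 / c := by
        gcongr
        linarith
      have h5 : 2 / c = 1 / c + 1 / c := by ring
      linarith
    calc _ ≤ ε * (2 / c) := by gcongr
      _ = J / 4 := by rw [hε]; field_simp; norm_num
  have hKη : K * (Real.exp δ - 1) ≤ J / 8 :=
    (mul_le_mul_of_nonneg_left hexp hK).trans hδ2
  have hfin : J / 4 ≤ B * μ.real E := by linarith
  have hfin2 : δ * a * T * Real.exp (-(1 + a) * T) ≤ μ.real E := by
    have h1 : δ * a ≤ B * μ.real E := by nlinarith
    have h2 : T * Real.exp (-(1 + a) * T) * B = 1 := by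
      rw [hB, mul_div_assoc', mul_assoc, ← Real.exp_add]
      have : -(1 + a) * T + (1 + a) * T = 0 := by ring
      rw [this, Real.exp_zero]
      field_simp
    calc δ * a * T * Real.exp (-(1 + a) * T) = (T * Real.exp (-(1 + a) * T)) * (δ * a) := by ring
      _ ≤ (T * Real.exp (-(1 + a) * T)) * (B * μ.real E) := by gcongr
      _ = μ.real E := by rw [← mul_assoc, h2, one_mul]
  rw [← ENNReal.ofReal_toReal (measure_ne_top μ E)]
  exact ENNReal.ofReal_le_ofReal hfin2
end

section
/- Let d ∈ {1,2,3} and let β = (d − 6 + √(d² − 20d + 68))/2. Then β > 0 and β² + (6 − d)β = 8 − 2d. Moreover, if f : (0,∞) → ℝ is twice differentiable and satisfies β² x² f''(x) + (8−2d)( x f'(x) + f(x) ) = f(x)² for all x > 0, then the function w : (0,∞) → ℝ defined by w(r) = r^{−2} f(r^{−β}) is twice differentiable and satisfies w''(r) + ((d−1)/r) w'(r) = w(r)² for all r > 0. -/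
open Set

/-- The low-dimensional exponent `β = (d - 6 + √(d² - 20d + 68))/2` for
`d ∈ {1,2,3}` is positive and satisfies `β² + (6-d)β = 8 - 2d`; moreover the
change of variables `w(r) = r^{-2} f(r^{-β})` transforms any solution of
`β² x² f'' + (8-2d)(x f' + f) = f²` on `(0,∞)` into a solution of the radial
equation `w'' + ((d-1)/r) w' = w²` on `(0,∞)`. -/
theorem beta_change_of_variables (d : ℕ) (hd : d = 1 ∨ d = 2 ∨ d = 3)
    (β : ℝ)
    (hβ : β = ((d : ℝ) - 6 + Real.sqrt ((d : ℝ) ^ 2 - 20 * (d : ℝ) + 68)) / 2)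
    (f : ℝ → ℝ)
    (hf1 : ∀ x ∈ Set.Ioi (0 : ℝ), DifferentiableAt ℝ f x)
    (hf2 : ∀ x ∈ Set.Ioi (0 : ℝ), DifferentiableAt ℝ (deriv f) x)
    (hODE : ∀ x ∈ Set.Ioi (0 : ℝ),
      β ^ 2 * x ^ 2 * deriv (deriv f) x
        + (8 - 2 * (d : ℝ)) * (x * deriv f x + f x) = (f x) ^ 2)
    (w : ℝ → ℝ)
    (hw : ∀ r : ℝ, w r = r ^ (-2 : ℝ) * f (r ^ (-β))) :
    0 < β ∧
    β ^ 2 + (6 - (d : ℝ)) * β = 8 - 2 * (d : ℝ) ∧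
    (∀ r ∈ Set.Ioi (0 : ℝ), DifferentiableAt ℝ w r) ∧
    (∀ r ∈ Set.Ioi (0 : ℝ), DifferentiableAt ℝ (deriv w) r) ∧
    (∀ r ∈ Set.Ioi (0 : ℝ),
      deriv (deriv w) r + ((d : ℝ) - 1) / r * deriv w r = (w r) ^ 2) := by
  have hd0 : (0 : ℝ) ≤ (d : ℝ) ^ 2 - 20 * (d : ℝ) + 68 := by
    rcases hd with h | h | h <;> subst h <;> norm_num
  have hs := Real.sq_sqrt hd0
  have hpos : 0 < β := by
    have : 6 - (d : ℝ) < Real.sqrt ((d : ℝ) ^ 2 - 20 * (d : ℝ) + 68) := by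
      apply Real.lt_sqrt_of_sq_lt
      rcases hd with h | h | h <;> subst h <;> norm_num
    rw [hβ]; linarith
  have hq : β ^ 2 + (6 - (d : ℝ)) * β = 8 - 2 * (d : ℝ) := by
    rw [hβ]; linear_combination hs / 4
  have hX : ∀ r : ℝ, 0 < r → HasDerivAt (fun s : ℝ => s ^ (-β)) (-β * r ^ (-β) / r) r := by
    intro r hr
    have h := Real.hasDerivAt_rpow_const (x := r) (p := -β) (Or.inl hr.ne')
    rw [Real.rpow_sub_one hr.ne'] at h
    convert h using 1
    ring
  have hwe : ∀ r : ℝ, 0 < r → w r = (r ^ 2)⁻¹ * f (r ^ (-β)) := by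
    intro r hr
    rw [hw, Real.rpow_neg hr.le]
    norm_num
  have hev : ∀ r : ℝ, 0 < r → ∀ᶠ s in nhds r, 0 < s := fun r hr => lt_mem_nhds hr
  have h1 : ∀ r : ℝ, 0 < r → HasDerivAt w
      ((r ^ 3)⁻¹ * (-2 * f (r ^ (-β)) - β * (r ^ (-β) * deriv f (r ^ (-β))))) r := by
    intro r hr
    have hXr : 0 < r ^ (-β) := Real.rpow_pos_of_pos hr _
    have a := (hf1 _ hXr).hasDerivAt.comp r (hX r hr)
    have b := ((hasDerivAt_pow 2 r).inv (pow_ne_zero 2 hr.ne')).mul a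
    refine HasDerivAt.congr_of_eventuallyEq (f := _) ?_ ((hev r hr).mono fun s hs => hwe s hs)
    refine b.congr_deriv ?_
    simp only [Function.comp, Pi.inv_apply]
    field_simp
    norm_num
    ring
  have h2 : ∀ r : ℝ, 0 < r → HasDerivAt (deriv w)
      ((r ^ 4)⁻¹ * (6 * f (r ^ (-β)) + (5 * β + β ^ 2) * (r ^ (-β) * deriv f (r ^ (-β)))
        + β ^ 2 * (r ^ (-β)) ^ 2 * deriv (deriv f) (r ^ (-β)))) r := by
    intro r hr
    have hXr : 0 < r ^ (-β) := Real.rpow_pos_of_pos hr _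
    have a := (hf1 _ hXr).hasDerivAt.comp r (hX r hr)
    have a2 := (hX r hr).mul ((hf2 _ hXr).hasDerivAt.comp r (hX r hr))
    have b := ((hasDerivAt_pow 3 r).inv (pow_ne_zero 3 hr.ne')).mul
      ((a.const_mul (-2)).sub (a2.const_mul β))
    refine HasDerivAt.congr_of_eventuallyEq (f := _) ?_
      ((hev r hr).mono fun s hs => (h1 s hs).deriv)
    refine b.congr_deriv ?_
    simp only [Function.comp, Pi.inv_apply, Pi.mul_apply, Pi.sub_apply]
    field_simp
    norm_num
    ring
  refine ⟨hpos, hq, fun r hr => (h1 r hr).differentiableAt,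
    fun r hr => (h2 r hr).differentiableAt, fun r hr => ?_⟩
  have hr' : 0 < r := hr
  have hO := hODE (r ^ (-β)) (Real.rpow_pos_of_pos hr' _)
  rw [(h2 r hr).deriv, (h1 r hr).deriv, hwe r hr, mul_pow, ← hO]
  generalize deriv (deriv f) (r ^ (-β)) = F2
  generalize deriv f (r ^ (-β)) = F1
  generalize f (r ^ (-β)) = F0
  generalize r ^ (-β) = X
  field_simp
  linear_combination (X * F1) * hq
end
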